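/- Let S be a finite subset of ℝ/ℤ and let x, y > 0 with x + y < 1/2. Then g(x,y) = Σ_{k ≥ 3} (−1)^{k+1} A_k(x,y), the sum being finite. Moreover, for every integer n ≥ 0 one has Σ_{k=3}^{4+2n} (−1)^{k+1} A_k(x,y) ≤ g(x,y) ≤ Σ_{k=3}^{3+2n} (−1)^{k+1} A_k(x,y). -/

import Mathlib

/-!
The proof is inclusion-exclusion over the points of `S` inside each spacing. Fix `(a, b, c) ∈ S³`
with `0 < ((a - b)) < x` and `0 < ((b - c)) < y`, and let `p` and `q` be the numbers of points of `S`
strictly between `a` and `b` and strictly between `b` and `c`. Since `x, y < 1/2`, signed distances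
along a tuple counted by `N_{i,j}` add up without wrapping around the circle (`chain_iff`), so the
tuples with `x_1 = a`, `x_i = b`, `x_{i+j} = c` amount to a choice of `i - 2` of the `p` points and
`j - 1` of the `q` points: there are `C(p, i - 2) * C(q, j - 1)` of them (`Nij_eq`). By Vandermonde
(`Ak_eq`), `A_k = ∑ C(p + q, k - 3)`, the sum running over all such triples, whereas `g` counts the
triples with `p + q = 0` (`gS2_eq`). The theorem then follows from
`∑_{k ≤ M} (-1)^k C(n, k) = (-1)^M C(n - 1, M)` for `n ≥ 1`, applied to `n = p + q` for each triple:
the error of the truncated sum has the sign of `(-1)^M`, and it vanishes once `M` exceeds `2 |S|`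
(`partial_sum`).
-/

/-- The signed distance `((t))`: the unique representative of `t ∈ ℝ/ℤ` in `[-1/2, 1/2)`. -/
noncomputable def sd (t : AddCircle (1 : ℝ)) : ℝ :=
  ((AddCircle.equivIco 1 (-(1 / 2)) t : Set.Ico (-(1 / 2) : ℝ) (-(1 / 2) + 1)) : ℝ)

/-- `N_{i,j}(x,y)`: the number of `(i+j)`-tuples `(x_1,…,x_{i+j}) ∈ S^{i+j}` with
`((x_k - x_{k+1})) > 0` for all `k`, `∑_{k=1}^{i-1} ((x_k - x_{k+1})) < x` and
`∑_{k=i}^{i+j-1} ((x_k - x_{k+1})) < y`. -/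
noncomputable def Nij (S : Finset (AddCircle (1 : ℝ))) (x y : ℝ) (i j : ℕ) : ℕ :=
  Nat.card {f : Fin (i + j) → AddCircle (1 : ℝ) //
    (∀ k, f k ∈ S) ∧
    (∀ k : Fin (i + j - 1),
      0 < sd (f ⟨k.1, by have := k.2; omega⟩ - f ⟨k.1 + 1, by have := k.2; omega⟩)) ∧
    (∑ k ∈ Finset.univ.filter (fun k : Fin (i + j - 1) => (k : ℕ) < i - 1),
      sd (f ⟨k.1, by have := k.2; omega⟩ - f ⟨k.1 + 1, by have := k.2; omega⟩)) < x ∧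
    (∑ k ∈ Finset.univ.filter (fun k : Fin (i + j - 1) => i - 1 ≤ (k : ℕ)),
      sd (f ⟨k.1, by have := k.2; omega⟩ - f ⟨k.1 + 1, by have := k.2; omega⟩)) < y}

/-- `A_k(x,y) = ∑_{i+j=k, i ≥ 2, j ≥ 1} N_{i,j}(x,y)`. -/
noncomputable def Ak (S : Finset (AddCircle (1 : ℝ))) (x y : ℝ) (k : ℕ) : ℕ :=
  ∑ i ∈ Finset.Icc 2 (k - 1), Nij S x y i (k - i)

/-- `g(x,y)`: the number of consecutive triples of `S` of diameter less than `(x,y)`. -/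
noncomputable def gS2 (S : Finset (AddCircle (1 : ℝ))) (x y : ℝ) : ℕ :=
  Nat.card {t : AddCircle (1 : ℝ) × AddCircle (1 : ℝ) × AddCircle (1 : ℝ) //
    t.1 ∈ S ∧ t.2.1 ∈ S ∧ t.2.2 ∈ S ∧
    0 < sd (t.1 - t.2.1) ∧ sd (t.1 - t.2.1) < x ∧
    0 < sd (t.2.1 - t.2.2) ∧ sd (t.2.1 - t.2.2) < y ∧
    (¬∃ e ∈ S, 0 < sd (t.1 - e) ∧ sd (t.1 - e) < sd (t.1 - t.2.1)) ∧
    (¬∃ e ∈ S, 0 < sd (t.2.1 - e) ∧ sd (t.2.1 - e) < sd (t.2.1 - t.2.2))}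

/-! ### Signed distance -/

/-- The circle `ℝ/ℤ`. -/
abbrev Circ := AddCircle (1 : ℝ)

theorem sd_coe (t : Circ) : ((sd t : ℝ) : Circ) = t := AddCircle.coe_equivIco

theorem sd_mem (t : Circ) : -(1 / 2) ≤ sd t ∧ sd t < 1 / 2 := by
  have h := (AddCircle.equivIco 1 (-(1 / 2) : ℝ) t).2
  rw [Set.mem_Ico] at h
  refine ⟨h.1, lt_of_lt_of_eq h.2 (by norm_num)⟩

theorem sd_coe_of_mem {r : ℝ} (h₁ : -(1 / 2) ≤ r) (h₂ : r < 1 / 2) : sd (r : Circ) = r :=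
  AddCircle.equivIco_coe_of_mem (p := (1 : ℝ)) (a := -(1 / 2)) ⟨h₁, by linarith⟩

theorem sd_zero : sd 0 = 0 := by
  have := sd_coe_of_mem (r := 0) (by norm_num) (by norm_num)
  simpa using this

theorem sd_injective : Function.Injective sd := fun s t h => by
  rw [← sd_coe s, h, sd_coe]

theorem sd_add {s t : Circ} (h₁ : -(1 / 2) ≤ sd s + sd t) (h₂ : sd s + sd t < 1 / 2) :
    sd (s + t) = sd s + sd t := by
  have := sd_coe_of_mem h₁ h₂
  rwa [AddCircle.coe_add, sd_coe, sd_coe] at this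

/-- No upper bound is needed, since both distances are automatically below `1/2`. -/
theorem sd_sub_of_lt {a e e' : Circ} (h : 0 ≤ sd (a - e)) (h' : sd (a - e) < sd (a - e')) :
    sd (e - e') = sd (a - e') - sd (a - e) := by
  have h₁ := sd_mem (a - e')
  have := sd_coe_of_mem (r := sd (a - e') - sd (a - e)) (by linarith) (by linarith)
  rw [AddCircle.coe_sub, sd_coe, sd_coe] at this
  rw [← this]; congr 1; abel

/-- Positive spacings of total length below `1/2` add up without wrapping around the circle. -/
theorem sd_telescope (F : ℕ → Circ) (p q : ℕ) (hpq : p ≤ q)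
    (pos : ∀ k, p ≤ k → k < q → 0 < sd (F k - F (k + 1)))
    (hs : ∑ k ∈ Finset.Ico p q, sd (F k - F (k + 1)) < 1 / 2) :
    sd (F p - F q) = ∑ k ∈ Finset.Ico p q, sd (F k - F (k + 1)) := by
  induction q, hpq using Nat.le_induction with
  | base => simp [sd_zero]
  | succ q hpq ih =>
    rw [Finset.sum_Ico_succ_top hpq] at hs ⊢
    have hq := pos q hpq q.lt_succ_self
    have ih := ih (fun k h₁ h₂ => pos k h₁ (by omega)) (by linarith)
    have h0 : 0 ≤ ∑ k ∈ Finset.Ico p q, sd (F k - F (k + 1)) :=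
      Finset.sum_nonneg fun k hk => by
        rw [Finset.mem_Ico] at hk
        exact (pos k hk.1 (by omega)).le
    rw [← ih] at hs h0 ⊢
    rw [← sd_add (by linarith) hs]
    congr 1; abel

/-- A run of positive spacings of total length less than `z ≤ 1/2` is the same as a pair of endpoints
at distance less than `z` with the remaining points in order between them. -/
theorem chain_iff (F : ℕ → Circ) (p q : ℕ) (hpq : p < q) (z : ℝ) (hz : z ≤ 1 / 2) :
    ((∀ k, p ≤ k → k < q → 0 < sd (F k - F (k + 1))) ∧
      ∑ k ∈ Finset.Ico p q, sd (F k - F (k + 1)) < z) ↔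
    (0 < sd (F p - F q) ∧ sd (F p - F q) < z ∧
      (∀ k, p < k → k < q → 0 < sd (F p - F k) ∧ sd (F p - F k) < sd (F p - F q)) ∧
      ∀ k l, p < k → k < l → l < q → sd (F p - F k) < sd (F p - F l)) := by
  constructor
  · rintro ⟨pos, hs⟩
    have tel : ∀ r, p ≤ r → r ≤ q →
        sd (F p - F r) = ∑ k ∈ Finset.Ico p r, sd (F k - F (k + 1)) := by
      intro r hr hrq
      refine sd_telescope F p r hr (fun k h₁ h₂ => pos k h₁ (by omega)) ?_
      refine lt_of_le_of_lt (Finset.sum_le_sum_of_subset_of_nonneg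
        (Finset.Ico_subset_Ico_right hrq) fun k hk _ => ?_) (lt_of_lt_of_le hs hz)
      rw [Finset.mem_Ico] at hk
      exact (pos k hk.1 hk.2).le
    have mono : ∀ k l, p ≤ k → k < l → l ≤ q → sd (F p - F k) < sd (F p - F l) := by
      intro k l hk hkl hl
      rw [tel k hk (by omega), tel l (by omega) hl,
        ← Finset.sum_Ico_consecutive _ hk hkl.le]
      have : 0 < ∑ i ∈ Finset.Ico k l, sd (F i - F (i + 1)) :=
        Finset.sum_pos (fun i hi => by
          rw [Finset.mem_Ico] at hi
          exact pos i (by omega) (by omega)) (by simpa using hkl)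
      linarith
    have mono0 : ∀ l, p < l → l ≤ q → 0 < sd (F p - F l) := fun l h₁ h₂ => by
      have := mono p l le_rfl h₁ h₂
      rwa [sub_self, sd_zero] at this
    refine ⟨mono0 q hpq le_rfl, ?_, fun k h₁ h₂ => ⟨mono0 k h₁ h₂.le, mono k q h₁.le h₂ le_rfl⟩,
      fun k l h₁ h₂ h₃ => mono k l h₁.le h₂ h₃.le⟩
    rwa [tel q hpq.le le_rfl]
  · rintro ⟨h0, hz', hb, hm⟩
    have nn : ∀ k, p ≤ k → k < q → 0 ≤ sd (F p - F k) := by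
      intro k h₁ h₂
      rcases h₁.eq_or_lt with rfl | h₁
      · rw [sub_self, sd_zero]
      · exact (hb k h₁ h₂).1.le
    have step : ∀ k, p ≤ k → k < q → sd (F p - F k) < sd (F p - F (k + 1)) := by
      intro k h₁ h₂
      rcases h₁.eq_or_lt with rfl | h₁
      · rw [sub_self, sd_zero]
        rcases (show p + 1 ≤ q from h₂).eq_or_lt with h | h
        · rwa [h]
        · exact (hb _ (by omega) h).1
      · rcases (show k + 1 ≤ q from h₂).eq_or_lt with h | h
        · rw [h]; exact (hb k h₁ h₂).2
        · exact hm k (k + 1) h₁ (by omega) h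
    have pos : ∀ k, p ≤ k → k < q → 0 < sd (F k - F (k + 1)) := fun k h₁ h₂ => by
      rw [sd_sub_of_lt (nn k h₁ h₂) (step k h₁ h₂)]
      linarith [step k h₁ h₂]
    refine ⟨pos, ?_⟩
    have hsum : ∑ k ∈ Finset.Ico p q, sd (F k - F (k + 1)) = sd (F p - F q) := by
      calc _ = ∑ k ∈ Finset.Ico p q, (sd (F p - F (k + 1)) - sd (F p - F k)) := by
            refine Finset.sum_congr rfl fun k hk => ?_
            rw [Finset.mem_Ico] at hk
            exact sd_sub_of_lt (nn k hk.1 hk.2) (step k hk.1 hk.2)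
        _ = sd (F p - F q) - sd (F p - F p) :=
            Finset.sum_Ico_sub (fun k => sd (F p - F k)) hpq.le
        _ = _ := by rw [sub_self (F p), sd_zero, sub_zero]
    rwa [hsum]

/-! ### Counting lemmas -/

/-- Lists of `m` elements of `P` that increase with respect to an injective key correspond to
`m`-element subsets of `P`. -/
theorem card_increasing {X : Type*} (φ : X → ℝ) (hφ : Function.Injective φ) (P : Finset X)
    (m : ℕ) :
    Finite {u : Fin m → X // (∀ k, u k ∈ P) ∧ ∀ k l, k < l → φ (u k) < φ (u l)} ∧
    Nat.card {u : Fin m → X // (∀ k, u k ∈ P) ∧ ∀ k l, k < l → φ (u k) < φ (u l)} =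
      P.card.choose m := by
  let _ : LinearOrder P := LinearOrder.lift' (fun e : P => φ e) (hφ.comp Subtype.val_injective)
  have lt_iff : ∀ e e' : P, e < e' ↔ φ e < φ e' := fun _ _ => Iff.rfl
  let E : {u : Fin m → X // (∀ k, u k ∈ P) ∧ ∀ k l, k < l → φ (u k) < φ (u l)} ≃
      (Fin m ↪o P) :=
    { toFun := fun u => OrderEmbedding.ofStrictMono (fun k => ⟨u.1 k, u.2.1 k⟩)
        fun k l h => (lt_iff _ _).2 (u.2.2 k l h)
      invFun := fun v => ⟨fun k => v k, fun k => (v k).2, fun k l h =>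
        (lt_iff _ _).1 (v.strictMono h)⟩
      left_inv := fun u => rfl
      right_inv := fun v => by ext; rfl }
  let E' := E.trans Set.powersetCard.ofFinEmbEquiv
  refine ⟨Finite.of_equiv _ E'.symm, ?_⟩
  rw [Nat.card_congr E', Set.powersetCard.card]
  simp

/-- The Bonferroni identity `∑_{k ≤ M} (-1)^k C(n, k) = [n = 0] + (-1)^M C(n - 1, M)`, where the second
term is present only for `n ≠ 0`. -/
theorem alternating (n M : ℕ) :
    (∑ k ∈ Finset.range (M + 1), (-1 : ℤ) ^ k * (n.choose k : ℤ)) =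
      (if n = 0 then 1 else 0) + (-1) ^ M * (if n = 0 then 0 else ((n - 1).choose M : ℤ)) := by
  cases n with
  | zero => simp [Finset.sum_range_succ']
  | succ n => simpa using Int.alternating_sum_range_choose_eq_choose (n := n) (m := M)

/-! ### Chains of points of `S` between two points -/

/-- The points of `S` strictly between `a` and `b`, going from `a` to `b` in the direction in which
`sd (a - ·)` increases (over a distance less than `1/2`). -/
noncomputable def between (S : Finset Circ) (a b : Circ) : Finset Circ :=
  S.filter fun e => 0 < sd (a - e) ∧ sd (a - e) < sd (a - b)

/-- The pairs of spacings counted by `gS2` with the consecutiveness conditions dropped: the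
triples `(a, b, c) ∈ S³` with `0 < ((a - b)) < x` and `0 < ((b - c)) < y`. -/
noncomputable def triples (S : Finset Circ) (x y : ℝ) : Finset (Circ × Circ × Circ) :=
  (S ×ˢ S ×ˢ S).filter fun t =>
    (0 < sd (t.1 - t.2.1) ∧ sd (t.1 - t.2.1) < x) ∧
      (0 < sd (t.2.1 - t.2.2) ∧ sd (t.2.1 - t.2.2) < y)

/-- `u` lists points of `S` strictly between `a` and `b`, in strictly increasing order of their
distance from `a`. -/
def IsChainIn (S : Finset Circ) (a b : Circ) {m : ℕ} (u : Fin m → Circ) : Prop :=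
  (∀ k, u k ∈ between S a b) ∧ ∀ k l, k < l → sd (a - u k) < sd (a - u l)

theorem card_chain (S : Finset Circ) (a b : Circ) (m : ℕ) :
    Finite {u : Fin m → Circ // IsChainIn S a b u} ∧
    Nat.card {u : Fin m → Circ // IsChainIn S a b u} = (between S a b).card.choose m :=
  card_increasing (fun e => sd (a - e)) (sd_injective.comp (sub_right_injective)) _ m

/-! ### Counting the tuples -/

/-- Splitting a tuple of length `m + n + 3` into its first entry, its entry of index `m + 1` and its
last entry, together with the `m` entries between the first two of these and the `n` entries
between the last two. -/
def splitTuple (X : Type*) (m n : ℕ) : (Fin (m + 2 + (n + 1)) → X) ≃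
    (X × X × X) × (Fin m → X) × (Fin n → X) where
  toFun f := ((f ⟨0, by omega⟩, f ⟨m + 1, by omega⟩, f ⟨m + n + 2, by omega⟩),
    fun k => f ⟨k + 1, by omega⟩, fun k => f ⟨k + (m + 2), by omega⟩)
  invFun w k :=
    if k.1 = 0 then w.1.1
    else if h : k.1 - 1 < m then w.2.1 ⟨k.1 - 1, h⟩
    else if k.1 = m + 1 then w.1.2.1
    else if h : k.1 - (m + 2) < n then w.2.2 ⟨k.1 - (m + 2), h⟩
    else w.1.2.2
  left_inv f := by
    funext k
    have hk := k.2
    dsimp only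
    split_ifs with h₁ h₂ h₃ h₄ <;> congr 1 <;> ext <;> dsimp only <;> omega
  right_inv := by
    rintro ⟨⟨a, b, c⟩, u, v⟩
    have h1 : ¬ (m + n + 2 - 1 < m) := by omega
    have h2 : ¬ (m + n + 2 - (m + 2) < n) := by omega
    have h3 : ¬ (m + n + 2 = m + 1) := by omega
    simp only [Prod.mk.injEq]
    refine ⟨⟨by simp, by simp, by
      rw [dif_neg h1, if_neg h3, dif_neg h2, if_neg (by omega)]⟩, ?_, ?_⟩
    · funext k
      simp
    · funext k
      have h4 : ¬ ((k : ℕ) + (m + 2) - 1 < m) := by omega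
      have h5 : ¬ ((k : ℕ) + (m + 2) = m + 1) := by omega
      rw [if_neg (by omega), dif_neg h4, if_neg h5]
      simp

theorem sum_fin_filter (N p q : ℕ) (g : ℕ → ℝ) (P : ℕ → Prop) [DecidablePred P]
    (h : ∀ k, (k < N ∧ P k) ↔ p ≤ k ∧ k < q) :
    ∑ k ∈ Finset.univ.filter (fun k : Fin N => P k), g k = ∑ k ∈ Finset.Ico p q, g k := by
  rw [Finset.sum_filter, Fin.sum_univ_eq_sum_range (fun k => if P k then g k else 0) N,
    ← Finset.sum_filter]
  refine Finset.sum_congr ?_ fun _ _ => rfl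
  ext k
  simp only [Finset.mem_filter, Finset.mem_range, Finset.mem_Ico]
  exact h k

/-- `chain_iff` in terms of `IsChainIn`, for the `m + 2` points `F p, …, F (p + m + 1)`. -/
theorem chain_iff' (S : Finset Circ) (F : ℕ → Circ) (p m : ℕ) (z : ℝ) (hz : z ≤ 1 / 2)
    (hF : ∀ k, p < k → k < p + m + 1 → F k ∈ S) :
    ((∀ k, p ≤ k → k < p + m + 1 → 0 < sd (F k - F (k + 1))) ∧
      ∑ k ∈ Finset.Ico p (p + m + 1), sd (F k - F (k + 1)) < z) ↔
    ((0 < sd (F p - F (p + m + 1)) ∧ sd (F p - F (p + m + 1)) < z) ∧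
      IsChainIn S (F p) (F (p + m + 1)) (fun k : Fin m => F (k + (p + 1)))) := by
  rw [chain_iff F p (p + m + 1) (by omega) z hz]
  simp only [IsChainIn, between, Finset.mem_filter]
  constructor
  · rintro ⟨h0, hz', hb, hm⟩
    refine ⟨⟨h0, hz'⟩, fun k => ⟨hF _ (by omega) (by omega), hb _ (by omega) (by omega)⟩,
      fun k l hkl => hm _ _ (by omega) ?_ (by omega)⟩
    have : (k : ℕ) < l := hkl
    omega
  · rintro ⟨⟨h0, hz'⟩, hb, hm⟩
    refine ⟨h0, hz', fun k h₁ h₂ => ?_, fun k l h₁ h₂ h₃ => ?_⟩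
    · have := (hb ⟨k - (p + 1), by omega⟩).2
      simpa only [Nat.sub_add_cancel (show p + 1 ≤ k from h₁)] using this
    · have := hm ⟨k - (p + 1), by omega⟩ ⟨l - (p + 1), by omega⟩ (by
        rw [Fin.mk_lt_mk]; omega)
      simpa only [Nat.sub_add_cancel (show p + 1 ≤ k from h₁),
        Nat.sub_add_cancel (show p + 1 ≤ l by omega)] using this

/-- The tuples counted by `N_{m+2,n+1}` with entries `x_1 = a`, `x_i = b`, `x_{i+j} = c` arise by
choosing `m` points of `S` between `a` and `b` and `n` points between `b` and `c`. -/
theorem Nij_eq (S : Finset Circ) (x y : ℝ) (hx : 0 < x) (hy : 0 < y) (hxy : x + y < 1 / 2)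
    (m n : ℕ) :
    Nij S x y (m + 2) (n + 1) = ∑ t ∈ triples S x y,
      (between S t.1 t.2.1).card.choose m * (between S t.2.1 t.2.2).card.choose n := by
  have key : ∀ f : Fin (m + 2 + (n + 1)) → Circ,
      ((∀ k, f k ∈ S) ∧
      (∀ k : Fin (m + 2 + (n + 1) - 1),
        0 < sd (f ⟨k.1, by have := k.2; omega⟩ - f ⟨k.1 + 1, by have := k.2; omega⟩)) ∧
      (∑ k ∈ Finset.univ.filter (fun k : Fin (m + 2 + (n + 1) - 1) => (k : ℕ) < m + 2 - 1),
        sd (f ⟨k.1, by have := k.2; omega⟩ - f ⟨k.1 + 1, by have := k.2; omega⟩)) < x ∧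
      (∑ k ∈ Finset.univ.filter (fun k : Fin (m + 2 + (n + 1) - 1) => m + 2 - 1 ≤ (k : ℕ)),
        sd (f ⟨k.1, by have := k.2; omega⟩ - f ⟨k.1 + 1, by have := k.2; omega⟩)) < y) ↔
      ((splitTuple Circ m n f).1 ∈ triples S x y ∧
        IsChainIn S (splitTuple Circ m n f).1.1 (splitTuple Circ m n f).1.2.1
          (splitTuple Circ m n f).2.1 ∧
        IsChainIn S (splitTuple Circ m n f).1.2.1 (splitTuple Circ m n f).1.2.2
          (splitTuple Circ m n f).2.2) := by
    intro f
    -- Extending the tuple to `ℕ` makes the index arithmetic free of dependent proofs.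
    obtain ⟨F, hF⟩ : ∃ F : ℕ → Circ, ∀ k (h : k < m + 2 + (n + 1)), f ⟨k, h⟩ = F k :=
      ⟨fun k => if h : k < m + 2 + (n + 1) then f ⟨k, h⟩ else 0, fun k h => by simp [h]⟩
    simp only [splitTuple, Equiv.coe_fn_mk, hF]
    rw [sum_fin_filter _ 0 (m + 1) (fun k => sd (F k - F (k + 1))) (fun k => k < m + 2 - 1)
        (by omega),
      sum_fin_filter _ (m + 1) (m + 1 + n + 1) (fun k => sd (F k - F (k + 1)))
        (fun k => m + 2 - 1 ≤ k) (by omega)]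
    have hpos : (∀ k : Fin (m + 2 + (n + 1) - 1), 0 < sd (F k - F (k + 1))) ↔
        (∀ k, 0 ≤ k → k < 0 + m + 1 → 0 < sd (F k - F (k + 1))) ∧
        (∀ k, m + 1 ≤ k → k < m + 1 + n + 1 → 0 < sd (F k - F (k + 1))) := by
      constructor
      · exact fun h => ⟨fun k _ hk => h ⟨k, by omega⟩, fun k _ hk => h ⟨k, by omega⟩⟩
      · rintro ⟨h₁, h₂⟩ ⟨k, hk⟩
        rcases lt_or_ge k (m + 1) with h | h
        · exact h₁ k (by omega) (by omega)
        · exact h₂ k h (by omega)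
    have e1 : m + n + 2 = m + 1 + n + 1 := by omega
    have e0 : m + 1 = 0 + m + 1 := by omega
    rw [hpos, e1]
    by_cases hS : ∀ k : Fin (m + 2 + (n + 1)), F k ∈ S
    · have c1 := chain_iff' S F 0 m x (by linarith) fun k _ h => hS ⟨k, by omega⟩
      have c2 := chain_iff' S F (m + 1) n y (by linarith) fun k _ h => hS ⟨k, by omega⟩
      have s0 : F 0 ∈ S := hS ⟨0, by omega⟩
      have s1 : F (m + 1) ∈ S := hS ⟨m + 1, by omega⟩
      have s2 : F (m + 1 + n + 1) ∈ S := hS ⟨m + 1 + n + 1, by omega⟩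
      simp only [zero_add] at c1 ⊢
      simp only [triples, Finset.mem_filter, Finset.mem_product, s0, s1, s2, true_and]
      have : ∀ k : ℕ, k + (m + 2) = k + (m + 1 + 1) := fun k => rfl
      simp only [this]
      tauto
    · refine iff_of_false (fun h => hS h.1) ?_
      rintro ⟨ht, hu, hv⟩
      apply hS
      rintro ⟨k, hk⟩
      simp only [triples, Finset.mem_filter, Finset.mem_product] at ht
      have hu := fun k => (Finset.mem_filter.1 (hu.1 k)).1
      have hv := fun k => (Finset.mem_filter.1 (hv.1 k)).1
      show F k ∈ S
      rcases Nat.eq_zero_or_pos k with rfl | h0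
      · exact ht.1.1
      rcases lt_trichotomy k (m + 1) with h | rfl | h
      · have := hu ⟨k - 1, by omega⟩
        simpa only [Nat.sub_add_cancel h0] using this
      · exact ht.1.2.1
      rcases (show k ≤ m + 1 + n + 1 by omega).eq_or_lt with rfl | h'
      · exact ht.1.2.2
      · have := hv ⟨k - (m + 2), by omega⟩
        simpa only [Nat.sub_add_cancel (show m + 2 ≤ k from h)] using this
  have E := (splitTuple Circ m n).subtypeEquiv (q := fun w =>
    w.1 ∈ triples S x y ∧ IsChainIn S w.1.1 w.1.2.1 w.2.1 ∧
      IsChainIn S w.1.2.1 w.1.2.2 w.2.2) key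
  let E' : {w : (Circ × Circ × Circ) × (Fin m → Circ) × (Fin n → Circ) //
      w.1 ∈ triples S x y ∧ IsChainIn S w.1.1 w.1.2.1 w.2.1 ∧
        IsChainIn S w.1.2.1 w.1.2.2 w.2.2} ≃
      Σ t : triples S x y, {u : Fin m → Circ // IsChainIn S t.1.1 t.1.2.1 u} ×
        {v : Fin n → Circ // IsChainIn S t.1.2.1 t.1.2.2 v} :=
    { toFun := fun w => ⟨⟨w.1.1, w.2.1⟩, ⟨w.1.2.1, w.2.2.1⟩, ⟨w.1.2.2, w.2.2.2⟩⟩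
      invFun := fun s => ⟨(s.1.1, s.2.1.1, s.2.2.1), s.1.2, s.2.1.2, s.2.2.2⟩
      left_inv := fun _ => rfl
      right_inv := fun _ => rfl }
  have := fun a b : Circ => (card_chain S a b m).1
  have := fun a b : Circ => (card_chain S a b n).1
  rw [Nij, Nat.card_congr E, Nat.card_congr E', Nat.card_sigma]
  simp only [Nat.card_prod, (card_chain _ _ _ _).2]
  exact Finset.sum_coe_sort (triples S x y) fun t =>
    (between S t.1 t.2.1).card.choose m * (between S t.2.1 t.2.2).card.choose n

/-- Vandermonde's identity turns the sum over `i + j = K + 3` into a single binomial coefficient. -/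
theorem Ak_eq (S : Finset Circ) (x y : ℝ) (hx : 0 < x) (hy : 0 < y) (hxy : x + y < 1 / 2)
    (K : ℕ) :
    Ak S x y (K + 3) = ∑ t ∈ triples S x y,
      ((between S t.1 t.2.1).card + (between S t.2.1 t.2.2).card).choose K := by
  have h1 : Finset.Icc 2 (K + 3 - 1) = (Finset.range (K + 1)).map (addRightEmbedding 2) := by
    rw [Finset.range_eq_Ico, Finset.map_add_right_Ico]
    ext; simp; omega
  rw [Ak, h1, Finset.sum_map]
  have h2 : ∀ m ∈ Finset.range (K + 1),
      Nij S x y (addRightEmbedding 2 m) (K + 3 - addRightEmbedding 2 m) =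
      ∑ t ∈ triples S x y, (between S t.1 t.2.1).card.choose m *
        (between S t.2.1 t.2.2).card.choose (K - m) := by
    intro m hm
    rw [Finset.mem_range] at hm
    have : K + 3 - (m + 2) = K - m + 1 := by omega
    rw [addRightEmbedding_apply, this, Nij_eq S x y hx hy hxy]
  rw [Finset.sum_congr rfl h2, Finset.sum_comm]
  refine Finset.sum_congr rfl fun t _ => ?_
  rw [Nat.add_choose_eq, Finset.Nat.sum_antidiagonal_eq_sum_range_succ_mk]

theorem gS2_eq (S : Finset Circ) (x y : ℝ) :
    (gS2 S x y : ℤ) = ∑ t ∈ triples S x y,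
      if (between S t.1 t.2.1).card + (between S t.2.1 t.2.2).card = 0 then 1 else 0 := by
  rw [← Finset.sum_filter, Finset.sum_const, nsmul_eq_mul, mul_one, gS2]
  congr 1
  rw [← Nat.card_eq_finsetCard]
  refine Nat.card_congr (Equiv.subtypeEquivRight fun t => ?_)
  simp only [triples, between, Finset.mem_filter, Finset.mem_product, Nat.add_eq_zero_iff,
    Finset.card_eq_zero, Finset.filter_eq_empty_iff, not_exists, not_and]
  tauto

/-- The error of the truncated alternating sum is `(-1)^M` times a nonnegative quantity, which
vanishes for large `M`. -/
theorem partial_sum (S : Finset Circ) (x y : ℝ) (hx : 0 < x) (hy : 0 < y) (hxy : x + y < 1 / 2)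
    (M : ℕ) :
    ∑ k ∈ Finset.Icc 3 (M + 3), (-1 : ℤ) ^ (k + 1) * (Ak S x y k : ℤ) =
      gS2 S x y + (-1) ^ M * ∑ t ∈ triples S x y,
        if (between S t.1 t.2.1).card + (between S t.2.1 t.2.2).card = 0 then 0 else
          (((between S t.1 t.2.1).card + (between S t.2.1 t.2.2).card - 1).choose M : ℤ) := by
  have h1 : Finset.Icc 3 (M + 3) = (Finset.range (M + 1)).map (addRightEmbedding 3) := by
    rw [Finset.range_eq_Ico, Finset.map_add_right_Ico]
    ext; simp; omega
  rw [h1, Finset.sum_map, gS2_eq, Finset.mul_sum, ← Finset.sum_add_distrib]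
  simp only [addRightEmbedding_apply, Ak_eq S x y hx hy hxy]
  push_cast
  simp only [Finset.mul_sum]
  rw [Finset.sum_comm]
  refine Finset.sum_congr rfl fun t _ => ?_
  rw [← alternating]
  refine Finset.sum_congr rfl fun k _ => ?_
  ring

/-- Kurlberg–Rudnick, Appendix A (joint level spacing lemma):
`g(x,y) = ∑_{k ≥ 3} (-1)^{k+1} A_k(x,y)` (a finite sum), and for every `n ≥ 0`,
`∑_{k=3}^{4+2n} (-1)^{k+1} A_k(x,y) ≤ g(x,y) ≤ ∑_{k=3}^{3+2n} (-1)^{k+1} A_k(x,y)`. -/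
theorem statement16 (S : Finset (AddCircle (1 : ℝ))) (x y : ℝ) (hx : 0 < x) (hy : 0 < y)
    (hxy : x + y < 1 / 2) :
    (gS2 S x y : ℤ) = (∑ᶠ (k : ℕ) (_ : 3 ≤ k), (-1 : ℤ) ^ (k + 1) * (Ak S x y k : ℤ)) ∧
    ∀ n : ℕ,
      (∑ k ∈ Finset.Icc 3 (4 + 2 * n), (-1 : ℤ) ^ (k + 1) * (Ak S x y k : ℤ)) ≤ (gS2 S x y : ℤ) ∧
      (gS2 S x y : ℤ) ≤ ∑ k ∈ Finset.Icc 3 (3 + 2 * n), (-1 : ℤ) ^ (k + 1) * (Ak S x y k : ℤ) := by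

  have nonneg : ∀ M : ℕ, 0 ≤ ∑ t ∈ triples S x y,
        if (between S t.1 t.2.1).card + (between S t.2.1 t.2.2).card = 0 then (0 : ℤ) else
          (((between S t.1 t.2.1).card + (between S t.2.1 t.2.2).card - 1).choose M : ℤ) :=
    fun M => Finset.sum_nonneg fun t _ => by split_ifs <;> positivity
  refine ⟨?_, fun n => ⟨?_, ?_⟩⟩
  · -- A triple has at most `2 |S|` interior points, so the terms with `k > 2 |S| + 3` vanish.
    have hcard : ∀ a b : Circ, (between S a b).card ≤ S.card := fun a b =>
      Finset.card_filter_le _ _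
    have hfin : (∑ᶠ (k : ℕ) (_ : 3 ≤ k), (-1 : ℤ) ^ (k + 1) * (Ak S x y k : ℤ)) =
        ∑ k ∈ Finset.Icc 3 (2 * S.card + 3), (-1 : ℤ) ^ (k + 1) * (Ak S x y k : ℤ) := by
      refine finsum_mem_eq_sum_of_inter_support_eq (s := {k : ℕ | 3 ≤ k}) _ ?_
      ext k
      simp only [Set.mem_inter_iff, Set.mem_ofPred_eq, Function.mem_support, Finset.coe_Icc,
        Set.mem_Icc]
      refine ⟨fun h => ⟨⟨h.1, ?_⟩, h.2⟩, fun h => ⟨h.1.1, h.2⟩⟩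
      by_contra hk
      obtain ⟨K, rfl⟩ : ∃ K, k = K + 3 := ⟨k - 3, by omega⟩
      apply h.2
      rw [Ak_eq S x y hx hy hxy, Finset.sum_eq_zero, Nat.cast_zero, mul_zero]
      intro t _
      refine Nat.choose_eq_zero_of_lt ?_
      have := hcard t.1 t.2.1
      have := hcard t.2.1 t.2.2
      omega
    rw [hfin, partial_sum S x y hx hy hxy, Finset.sum_eq_zero, mul_zero, add_zero]
    intro t _
    split_ifs with h
    · rfl
    · rw [Nat.choose_eq_zero_of_lt, Nat.cast_zero]
      have := hcard t.1 t.2.1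
      have := hcard t.2.1 t.2.2
      omega
  · have := partial_sum S x y hx hy hxy (2 * n + 1)
    rw [show 4 + 2 * n = 2 * n + 1 + 3 by ring, this, Odd.neg_one_pow ⟨n, rfl⟩]
    linarith [nonneg (2 * n + 1)]
  · have := partial_sum S x y hx hy hxy (2 * n)
    rw [show 3 + 2 * n = 2 * n + 3 by ring, this, Even.neg_one_pow ⟨n, by ring⟩]
    linarith [nonneg (2 * n)]
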